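/- Let T > 0 and M ∈ ℝ, and define z(t) = 2M / (|M|(T−t) + 1) for t ∈ [0,T]. Then z is differentiable on [0,T], satisfies z′(t) = z(t)|z(t)|/2 for all t ∈ [0,T], and z(T) = 2M. Moreover, z is the unique such function: any differentiable w : [0,T] → ℝ satisfying w′(t) = w(t)|w(t)|/2 on [0,T] with w(T) = 2M coincides with z. -/

import Mathlib

/-!
The vector field `y ↦ c ‖y‖ y` is locally Lipschitz, so solutions are determined by their terminal
value. Since the field is radial, a solution stays on the ray of its terminal value `x`, and its
norm `r` solves the scalar Riccati equation `r' = c r²`; thus `1 / r` is affine with slope `-c`.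
The equation `z' = z |z| / 2` with terminal value `2 M` is the case `c = 1 / 2`, `x = 2 M` on the
real line.
-/

section NormedSpace

variable {E : Type*} [NormedAddCommGroup E] [NormedSpace ℝ E]

theorem eqOn_Icc_of_isIntegralCurveOn_of_eq_right {v : E → E} {s : Set E} {γ γ' : ℝ → E} {a b : ℝ}
    (hv : LocallyLipschitzOn s v)
    (hγ : IsIntegralCurveOn γ (fun _ ↦ v) (Set.Icc a b)) (hγs : Set.MapsTo γ (Set.Icc a b) s)
    (hγ' : IsIntegralCurveOn γ' (fun _ ↦ v) (Set.Icc a b)) (hγs' : Set.MapsTo γ' (Set.Icc a b) s)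
    (hb : γ b = γ' b) :
    Set.EqOn γ γ' (Set.Icc a b) := by
  -- Both curves trace out compact sets, and on their union `v` is globally Lipschitz.
  have hcompact : IsCompact (γ '' Set.Icc a b ∪ γ' '' Set.Icc a b) :=
    (isCompact_Icc.image_of_continuousOn hγ.continuousOn).union
      (isCompact_Icc.image_of_continuousOn hγ'.continuousOn)
  have hsub : γ '' Set.Icc a b ∪ γ' '' Set.Icc a b ⊆ s :=
    Set.union_subset hγs.image_subset hγs'.image_subset
  obtain ⟨K, hK⟩ := (hv.mono hsub).exists_lipschitzOnWith_of_compact hcompact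
  have hasDerivWithinAt_Iic {δ : ℝ → E} (hδ : IsIntegralCurveOn δ (fun _ ↦ v) (Set.Icc a b))
      (t : ℝ) (ht : t ∈ Set.Ioc a b) : HasDerivWithinAt δ (v (δ t)) (Set.Iic t) t :=
    (hδ t (Set.Ioc_subset_Icc_self ht)).mono_of_mem_nhdsWithin (Icc_mem_nhdsLE_of_mem ht)
  exact ODE_solution_unique_of_mem_Icc_left (v := fun _ ↦ v) (fun _ _ ↦ hK)
    hγ.continuousOn (hasDerivWithinAt_Iic hγ)
    (fun t ht ↦ .inl (Set.mem_image_of_mem γ (Set.Ioc_subset_Icc_self ht)))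
    hγ'.continuousOn (hasDerivWithinAt_Iic hγ')
    (fun t ht ↦ .inr (Set.mem_image_of_mem γ' (Set.Ioc_subset_Icc_self ht))) hb

theorem locallyLipschitz_const_mul_norm_smul_self (c : ℝ) :
    LocallyLipschitz fun y : E ↦ (c * ‖y‖) • y := by
  have hsmul : ContDiff ℝ 1 fun p : ℝ × E ↦ (c * p.1) • p.2 := by fun_prop
  exact hsmul.locallyLipschitz.comp
    (lipschitzWith_one_norm.locallyLipschitz.prodMk LocallyLipschitz.id)

/-- The solution of the radial Riccati equation `γ' = c ‖γ‖ γ` with terminal value `γ T = x`. The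
formula is meaningful at times `t` with `0 < 1 + c ‖x‖ (T - t)`; where this quantity vanishes the
solution blows up, and the convention `0⁻¹ = 0` gives the value `0`. -/
noncomputable def radialRiccatiSol (c T : ℝ) (x : E) (t : ℝ) : E :=
  (1 + c * ‖x‖ * (T - t))⁻¹ • x

@[simp]
theorem radialRiccatiSol_self (c T : ℝ) (x : E) : radialRiccatiSol c T x T = x := by
  simp [radialRiccatiSol]

theorem hasDerivAt_radialRiccatiSol {c T t : ℝ} {x : E} (ht : 0 < 1 + c * ‖x‖ * (T - t)) :
    HasDerivAt (radialRiccatiSol c T x)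
      ((c * ‖radialRiccatiSol c T x t‖) • radialRiccatiSol c T x t) t := by
  have hdenom : HasDerivAt (fun s ↦ 1 + c * ‖x‖ * (T - s)) (-(c * ‖x‖)) t := by
    simpa using (((hasDerivAt_id t).const_sub T).const_mul (c * ‖x‖)).const_add 1
  refine ((hdenom.inv ht.ne').smul_const x).congr_deriv ?_
  rw [radialRiccatiSol, norm_smul, norm_inv, Real.norm_of_nonneg ht.le, smul_smul]
  congr 1
  field_simp

theorem isIntegralCurveOn_radialRiccatiSol {c : ℝ} (hc : 0 ≤ c) (T : ℝ) (x : E) :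
    IsIntegralCurveOn (radialRiccatiSol c T x) (fun _ y ↦ (c * ‖y‖) • y) (Set.Iic T) := by
  intro t ht
  have hTt : 0 ≤ T - t := sub_nonneg.2 ht
  exact (hasDerivAt_radialRiccatiSol (by positivity)).hasDerivWithinAt

theorem stmt_5_general {c : ℝ} (hc : 0 ≤ c) (a T : ℝ) (x : E) :
    IsIntegralCurveOn (radialRiccatiSol c T x) (fun _ y ↦ (c * ‖y‖) • y) (Set.Icc a T) ∧
    radialRiccatiSol c T x T = x ∧
    ∀ w : ℝ → E, IsIntegralCurveOn w (fun _ y ↦ (c * ‖y‖) • y) (Set.Icc a T) → w T = x →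
      Set.EqOn w (radialRiccatiSol c T x) (Set.Icc a T) := by
  have hsol := (isIntegralCurveOn_radialRiccatiSol hc T x).mono
    (Set.Icc_subset_Iic_self (a := a))
  refine ⟨hsol, radialRiccatiSol_self c T x, fun w hw hwT ↦ ?_⟩
  exact eqOn_Icc_of_isIntegralCurveOn_of_eq_right
    (locallyLipschitz_const_mul_norm_smul_self c).locallyLipschitzOn
    hw (Set.mapsTo_univ _ _) hsol (Set.mapsTo_univ _ _) (by simpa using hwT)

end NormedSpace

theorem radialRiccatiSol_half_two_mul (T M : ℝ) :
    radialRiccatiSol (1 / 2) T (2 * M) = fun t ↦ 2 * M / (|M| * (T - t) + 1) := by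
  funext t
  have hnorm : 1 / 2 * ‖2 * M‖ = |M| := by simp
  rw [radialRiccatiSol, hnorm, smul_eq_mul, inv_mul_eq_div, add_comm]

theorem half_mul_norm_smul_self (y : ℝ) : (1 / 2 * ‖y‖) • y = y * |y| / 2 := by
  rw [Real.norm_eq_abs, smul_eq_mul]
  ring

/-- Let `T > 0`, `M ∈ ℝ`, and `z(t) = 2M/(|M|(T−t)+1)` on `[0,T]`. Then `z` is
differentiable on `[0,T]`, solves `z′ = z|z|/2` there, and `z(T) = 2M`; moreover
it is the unique such function. -/
theorem stmt_5 (T M : ℝ) (hT : 0 < T) :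
    (∀ t ∈ Set.Icc (0:ℝ) T,
      HasDerivWithinAt (fun s : ℝ => 2*M / (|M| * (T - s) + 1))
        ((2*M / (|M| * (T - t) + 1)) * |2*M / (|M| * (T - t) + 1)| / 2)
        (Set.Icc (0:ℝ) T) t) ∧
    (2*M / (|M| * (T - T) + 1) = 2*M) ∧
    (∀ w : ℝ → ℝ,
      (∀ t ∈ Set.Icc (0:ℝ) T,
        HasDerivWithinAt w (w t * |w t| / 2) (Set.Icc (0:ℝ) T) t) →
      w T = 2*M →
      ∀ t ∈ Set.Icc (0:ℝ) T, w t = 2*M / (|M| * (T - t) + 1)) := by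
  simpa only [IsIntegralCurveOn, Set.EqOn, half_mul_norm_smul_self, radialRiccatiSol_half_two_mul]
    using stmt_5_general (one_half_pos (α := ℝ)).le 0 T (2 * M)
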